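/- arXiv:1703.06528 — 5 statements merged into one kernel-verified Lean document; each statement's English description precedes it below -/
import Mathlib

section
/- Let X be a measurable space, Y ⊆ ℝ closed, P a probability measure on X × Y with marginal P^X, and L : Y × ℝ → [0,∞) a measurable loss function that is Lipschitz continuous with constant |L|₁. Let F be a set of measurable functions X → ℝ with F ⊆ L¹(P^X) such that F is dense in L¹(P^X). Then the infimum of the shifted risk over all measurable functions with P-integrable shifted loss equals the infimum over F: inf { R_{L⋆,P}(f) : f : X → ℝ measurable, (x,y) ↦ L(y,f(x)) − L(y,0) P-integrable } = inf { R_{L⋆,P}(f) : f ∈ F }. -/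
open MeasureTheory

/-- For a Lipschitz continuous loss and a set `F` of measurable functions,
`F ⊆ L¹(P^X)` and dense in `L¹(P^X)`, the infimum of the shifted risk over all measurable
functions with `P`-integrable shifted loss equals the infimum over `F`. -/
theorem stmt8 {X : Type*} [MeasurableSpace X]
    (Y : Set ℝ) (hY : IsClosed Y)
    (P : Measure (X × ℝ)) [IsProbabilityMeasure P]
    (hPY : ∀ᵐ p ∂P, p.2 ∈ Y)
    (L : ℝ → ℝ → ℝ)
    (hLmeas : Measurable (Function.uncurry L))
    (hLnonneg : ∀ y ∈ Y, ∀ t : ℝ, 0 ≤ L y t)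
    (C : ℝ) (hC : 0 ≤ C)
    (hLip : ∀ y ∈ Y, ∀ s t : ℝ, |L y t - L y s| ≤ C * |t - s|)
    (F : Set (X → ℝ))
    (hFmeas : ∀ f ∈ F, Measurable f)
    (hFint : ∀ f ∈ F, Integrable f (P.map Prod.fst))
    (hFdense : ∀ g : X → ℝ, Measurable g → Integrable g (P.map Prod.fst) →
      ∀ ε : ℝ, 0 < ε → ∃ f ∈ F, ∫ x, |f x - g x| ∂(P.map Prod.fst) < ε) :
    sInf {r : ℝ | ∃ f : X → ℝ, Measurable f ∧
        Integrable (fun p : X × ℝ => L p.2 (f p.1) - L p.2 0) P ∧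
        r = ∫ p : X × ℝ, (L p.2 (f p.1) - L p.2 0) ∂P} =
      sInf {r : ℝ | ∃ f ∈ F, r = ∫ p : X × ℝ, (L p.2 (f p.1) - L p.2 0) ∂P} := by
  classical
  have hmeas : ∀ f : X → ℝ, Measurable f →
      Measurable (fun p : X × ℝ => L p.2 (f p.1) - L p.2 0) := by
    intro f hf
    have h1 : Measurable (fun p : X × ℝ => L p.2 (f p.1)) :=
      hLmeas.comp (measurable_snd.prodMk (hf.comp measurable_fst))
    have h2 : Measurable (fun p : X × ℝ => L p.2 0) :=
      hLmeas.comp (measurable_snd.prodMk measurable_const)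
    exact h1.sub h2
  have hcomp : ∀ f : X → ℝ, Integrable f (P.map Prod.fst) →
      Integrable (fun p : X × ℝ => f p.1) P := fun f hf =>
    hf.comp_measurable measurable_fst
  have hint : ∀ f : X → ℝ, Measurable f → Integrable f (P.map Prod.fst) →
      Integrable (fun p : X × ℝ => L p.2 (f p.1) - L p.2 0) P := by
    intro f hf hfi
    refine Integrable.mono' ((hcomp f hfi).abs.const_mul C) (hmeas f hf).aestronglyMeasurable ?_
    filter_upwards [hPY] with p hp
    have := hLip p.2 hp 0 (f p.1)
    simpa using this
  set A : Set ℝ := {r : ℝ | ∃ f : X → ℝ, Measurable f ∧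
        Integrable (fun p : X × ℝ => L p.2 (f p.1) - L p.2 0) P ∧
        r = ∫ p : X × ℝ, (L p.2 (f p.1) - L p.2 0) ∂P} with hA
  set B : Set ℝ := {r : ℝ | ∃ f ∈ F, r = ∫ p : X × ℝ, (L p.2 (f p.1) - L p.2 0) ∂P} with hB
  have hBA : B ⊆ A := by
    rintro r ⟨f, hf, rfl⟩
    exact ⟨f, hFmeas f hf, hint f (hFmeas f hf) (hFint f hf), rfl⟩
  have key : ∀ a ∈ A, ∀ ε : ℝ, 0 < ε → ∃ b ∈ B, b < a + ε := by
    rintro a ⟨f, hf, hfi, rfl⟩ ε hε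
    let g : ℕ → X → ℝ := fun n x => if |f x| ≤ n then f x else 0
    have hgm : ∀ n, Measurable (g n) := fun n =>
      Measurable.ite (measurableSet_le hf.abs measurable_const) hf measurable_const
    haveI : IsProbabilityMeasure (P.map (Prod.fst : X × ℝ → X)) :=
      Measure.isProbabilityMeasure_map measurable_fst.aemeasurable
    have hgi : ∀ n, Integrable (g n) (P.map Prod.fst) := by
      intro n
      refine Integrable.mono' (integrable_const (n : ℝ)) (hgm n).aestronglyMeasurable ?_
      refine Filter.Eventually.of_forall fun x => ?_
      simp only [g, Real.norm_eq_abs]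
      split_ifs with h
      · exact h
      · simp
    have hlim : Filter.Tendsto (fun n => ∫ p : X × ℝ, (L p.2 (g n p.1) - L p.2 0) ∂P)
        Filter.atTop (nhds (∫ p : X × ℝ, (L p.2 (f p.1) - L p.2 0) ∂P)) := by
      refine tendsto_integral_of_dominated_convergence
        (fun p => |L p.2 (f p.1) - L p.2 0|)
        (fun n => (hmeas _ (hgm n)).aestronglyMeasurable) hfi.abs ?_ ?_
      · intro n
        refine Filter.Eventually.of_forall fun p => ?_
        simp only [g, Real.norm_eq_abs]
        split_ifs with h
        · exact le_rfl
        · simp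
      · refine Filter.Eventually.of_forall fun p => ?_
        obtain ⟨N, hN⟩ := exists_nat_ge |f p.1|
        refine tendsto_const_nhds.congr' ?_
        filter_upwards [Filter.eventually_ge_atTop N] with n hn
        have : |f p.1| ≤ n := hN.trans (by exact_mod_cast hn)
        simp [g, this]
    obtain ⟨n, hn⟩ := (hlim.eventually_lt_const
      (show _ < (∫ p : X × ℝ, (L p.2 (f p.1) - L p.2 0) ∂P) + ε / 2 by linarith)).exists
    have hδ : 0 < ε / (2 * (C + 1)) := by positivity
    obtain ⟨h, hhF, hh⟩ := hFdense (g n) (hgm n) (hgi n) _ hδ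
    refine ⟨_, ⟨h, hhF, rfl⟩, ?_⟩
    have hdi : Integrable (fun x => |h x - g n x|) (P.map Prod.fst) :=
      ((hFint h hhF).sub (hgi n)).abs
    have e1 : ∫ p : X × ℝ, |h p.1 - g n p.1| ∂P = ∫ x, |h x - g n x| ∂(P.map Prod.fst) :=
      (integral_map measurable_fst.aemeasurable hdi.aestronglyMeasurable).symm
    have e2 : ∫ p : X × ℝ, (L p.2 (h p.1) - L p.2 0) ∂P ≤
        ∫ p : X × ℝ, ((L p.2 (g n p.1) - L p.2 0) + C * |h p.1 - g n p.1|) ∂P := by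
      refine integral_mono_ae (hint h (hFmeas h hhF) (hFint h hhF))
        ((hint _ (hgm n) (hgi n)).add ((hcomp _ hdi).const_mul C)) ?_
      filter_upwards [hPY] with p hp
      have := (abs_le.1 (hLip p.2 hp (g n p.1) (h p.1))).2
      linarith
    rw [integral_add (hint _ (hgm n) (hgi n)) ((hcomp _ hdi).const_mul C),
      integral_const_mul, e1] at e2
    have e3 : C * ∫ x, |h x - g n x| ∂(P.map Prod.fst) ≤ ε / 2 := by
      calc C * ∫ x, |h x - g n x| ∂(P.map Prod.fst) ≤ (C + 1) * (ε / (2 * (C + 1))) := by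
            refine mul_le_mul (by linarith) hh.le (integral_nonneg fun x => abs_nonneg _)
              (by linarith)
        _ = ε / 2 := by field_simp
    linarith
  by_cases hbd : BddBelow A
  · have hBne : B.Nonempty := by
      obtain ⟨f, hf, -⟩ := hFdense (fun _ => 0) measurable_const (integrable_zero _ _ _) 1 one_pos
      exact ⟨_, f, hf, rfl⟩
    apply le_antisymm
    · exact csInf_le_csInf hbd hBne hBA
    · refine le_csInf (hBne.mono hBA) fun a ha => ?_
      refine le_of_forall_pos_le_add fun ε hε => ?_
      obtain ⟨b, hb, hba⟩ := key a ha ε hε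
      exact (csInf_le (hbd.mono hBA) hb).trans hba.le
  · have hbd' : ¬ BddBelow B := by
      rintro ⟨m, hm⟩
      refine hbd ⟨m, fun a ha => ?_⟩
      refine le_of_forall_pos_le_add fun ε hε => ?_
      obtain ⟨b, hb, hba⟩ := key a ha ε hε
      exact (hm hb).trans hba.le
    rw [Real.sInf_of_not_bddBelow hbd, Real.sInf_of_not_bddBelow hbd']
end

section
/- Let X be a measurable space, Y ⊆ ℝ closed, P a probability measure on X × Y with marginal P^X, and L : Y × ℝ → [0,∞) a measurable loss function that is Lipschitz continuous with constant |L|₁. Then for all measurable f, g : X → ℝ with ∫|f| dP^X < ∞ and ∫|g| dP^X < ∞, the shifted risks are finite and |R_{L⋆,P}(f) − R_{L⋆,P}(g)| ≤ |L|₁·∫ |f − g| dP^X. -/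
open MeasureTheory

/-- For a Lipschitz continuous loss `L` (constant `C = |L|₁`) and measurable
`f, g : X → ℝ` that are `P^X`-integrable, the shifted risks are finite (the shifted losses are
`P`-integrable) and `|R_{L⋆,P}(f) - R_{L⋆,P}(g)| ≤ C·∫|f - g| dP^X`. -/
theorem stmt9 {X : Type*} [MeasurableSpace X]
    (Y : Set ℝ) (hY : IsClosed Y)
    (P : Measure (X × ℝ)) [IsProbabilityMeasure P]
    (hPY : ∀ᵐ p ∂P, p.2 ∈ Y)
    (L : ℝ → ℝ → ℝ)
    (hLmeas : Measurable (Function.uncurry L))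
    (hLnonneg : ∀ y ∈ Y, ∀ t : ℝ, 0 ≤ L y t)
    (C : ℝ) (hC : 0 ≤ C)
    (hLip : ∀ y ∈ Y, ∀ s t : ℝ, |L y t - L y s| ≤ C * |t - s|)
    (f g : X → ℝ) (hf : Measurable f) (hg : Measurable g)
    (hfint : Integrable f (P.map Prod.fst))
    (hgint : Integrable g (P.map Prod.fst)) :
    Integrable (fun p : X × ℝ => L p.2 (f p.1) - L p.2 0) P ∧
    Integrable (fun p : X × ℝ => L p.2 (g p.1) - L p.2 0) P ∧
    |(∫ p : X × ℝ, (L p.2 (f p.1) - L p.2 0) ∂P) -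
        ∫ p : X × ℝ, (L p.2 (g p.1) - L p.2 0) ∂P| ≤
      C * ∫ x, |f x - g x| ∂(P.map Prod.fst) := by
  have key : ∀ h : X → ℝ, Measurable h → Integrable h (P.map Prod.fst) →
      Integrable (fun p : X × ℝ => L p.2 (h p.1) - L p.2 0) P := by
    intro h hh hi
    have hi' : Integrable (fun p : X × ℝ => h p.1) P := hi.comp_measurable measurable_fst
    have m1 : Measurable (fun p : X × ℝ => L p.2 (h p.1)) :=
      hLmeas.comp (measurable_snd.prodMk (hh.comp measurable_fst))
    have m2 : Measurable (fun p : X × ℝ => L p.2 0) :=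
      hLmeas.comp (measurable_snd.prodMk measurable_const)
    refine (hi'.abs.const_mul C).mono' (m1.sub m2).aestronglyMeasurable ?_
    filter_upwards [hPY] with p hp
    simpa using hLip p.2 hp 0 (h p.1)
  have If := key f hf hfint
  have Ig := key g hg hgint
  refine ⟨If, Ig, ?_⟩
  have hd : Integrable (fun p : X × ℝ => |f p.1 - g p.1|) P :=
    ((hfint.sub hgint).comp_measurable measurable_fst).abs
  have hm : Measurable (fun x => |f x - g x|) := (hf.sub hg).abs
  rw [← integral_sub If Ig, integral_map measurable_fst.aemeasurable
    hm.aestronglyMeasurable, ← integral_const_mul, ← Real.norm_eq_abs]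
  refine norm_integral_le_of_norm_le (hd.const_mul C) ?_
  filter_upwards [hPY] with p hp
  simpa using hLip p.2 hp (g p.1) (f p.1)
end

section
/- Let X be a measurable space, Y ⊆ ℝ closed, P a probability measure on X × Y with marginal P^X, and L : Y × ℝ → [0,∞) a measurable loss function that is Lipschitz continuous with constant |L|₁ and satisfies L(y,y) = 0 for all y ∈ Y. If f : X → ℝ is measurable with ∫|f| dP^X < ∞ and (x,y) ↦ y is P-integrable, then (x,y) ↦ L(y,f(x)) is P-integrable and |∫ L(y,f(x)) dP(x,y)| ≤ |L|₁·( ∫ |f| dP^X + ∫ |y| dP(x,y) ). -/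
open MeasureTheory

/-- For a Lipschitz continuous loss `L` with `L(y,y) = 0` for all `y ∈ Y`, a
measurable `f` with `∫|f| dP^X < ∞` and `(x,y) ↦ y` `P`-integrable, the loss
`(x,y) ↦ L(y,f(x))` is `P`-integrable and
`|∫ L(y,f(x)) dP| ≤ |L|₁·(∫|f| dP^X + ∫|y| dP)`. -/
theorem stmt12 {X : Type*} [MeasurableSpace X]
    (Y : Set ℝ) (hY : IsClosed Y)
    (P : Measure (X × ℝ)) [IsProbabilityMeasure P]
    (hPY : ∀ᵐ p ∂P, p.2 ∈ Y)
    (L : ℝ → ℝ → ℝ)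
    (hLmeas : Measurable (Function.uncurry L))
    (hLnonneg : ∀ y ∈ Y, ∀ t : ℝ, 0 ≤ L y t)
    (hLzero : ∀ y ∈ Y, L y y = 0)
    (C : ℝ) (hC : 0 ≤ C)
    (hLip : ∀ y ∈ Y, ∀ s t : ℝ, |L y t - L y s| ≤ C * |t - s|)
    (f : X → ℝ) (hf : Measurable f)
    (hfint : Integrable f (P.map Prod.fst))
    (hyint : Integrable (fun p : X × ℝ => p.2) P) :
    Integrable (fun p : X × ℝ => L p.2 (f p.1)) P ∧
    |∫ p : X × ℝ, L p.2 (f p.1) ∂P| ≤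
      C * ((∫ x, |f x| ∂(P.map Prod.fst)) + ∫ p : X × ℝ, |p.2| ∂P) := by
  have hb : ∀ᵐ p ∂P, ‖L p.2 (f p.1)‖ ≤ C * (|f p.1| + |p.2|) := by
    filter_upwards [hPY] with p hp
    have h := hLip p.2 hp p.2 (f p.1)
    rw [hLzero p.2 hp, sub_zero] at h
    exact h.trans (mul_le_mul_of_nonneg_left (norm_sub_le (f p.1) p.2) hC)
  have hf1 : Integrable (fun p : X × ℝ => |f p.1|) P :=
    (hfint.comp_measurable measurable_fst).abs
  have hy1 : Integrable (fun p : X × ℝ => |p.2|) P := hyint.abs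
  have hg : Integrable (fun p : X × ℝ => C * (|f p.1| + |p.2|)) P :=
    (hf1.add hy1).const_mul C
  have hm : Measurable (fun p : X × ℝ => L p.2 (f p.1)) :=
    hLmeas.comp (measurable_snd.prodMk (hf.comp measurable_fst))
  refine ⟨hg.mono' hm.aestronglyMeasurable hb, ?_⟩
  have h := norm_integral_le_of_norm_le hg hb
  rw [integral_const_mul, integral_add hf1 hy1] at h
  rw [integral_map measurable_fst.aemeasurable hfint.abs.aestronglyMeasurable]
  exact h
end

section
/- Let X be a measurable space, Y ⊆ ℝ closed, P a probability measure on X × Y, and L : Y × ℝ → [0,∞) a measurable loss function such that t ↦ L(y,t) is convex for every y ∈ Y. Let X = X_1 ∪ … ∪ X_B be a cover by measurable regions with measurable weights w_b : X → [0,1] satisfying Σ_b w_b = 1 and w_b = 0 off X_b, and let f_1,…,f_B : X → ℝ be measurable. For each b with P(X_b × Y) > 0 let P_b := P(X_b×Y)^{-1}·P|_{X_b×Y}. Then (with integrals of nonnegative functions taken in [0,∞]): ∫ L(y, Σ_{b=1}^B w_b(x)·f_b(x)) dP(x,y) ≤ Σ_{b=1}^B P(X_b × Y) · ∫ L(y,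 f_b(x)) dP_b(x,y). -/
open MeasureTheory

/-- For a convex loss `L`, a cover `X = X_1 ∪ … ∪ X_B` with weights `w_b` and
measurable `f_1,…,f_B : X → ℝ`, with `P_b` the normalized restriction of `P` to `X_b × Y`
(with integrals of the nonnegative loss taken in `[0,∞]`):
`∫ L(y, Σ_b w_b(x)·f_b(x)) dP ≤ Σ_b P(X_b × Y) · ∫ L(y, f_b(x)) dP_b`. -/
theorem stmt17 {X : Type*} [MeasurableSpace X]
    (Y : Set ℝ) (hY : IsClosed Y) (hYmeas : MeasurableSet Y)
    (P : Measure (X × ℝ)) [IsProbabilityMeasure P]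
    (hPY : ∀ᵐ p ∂P, p.2 ∈ Y)
    (L : ℝ → ℝ → ℝ)
    (hLmeas : Measurable (Function.uncurry L))
    (hLnonneg : ∀ y ∈ Y, ∀ t : ℝ, 0 ≤ L y t)
    (hLconv : ∀ y ∈ Y, ConvexOn ℝ Set.univ (fun t => L y t))
    (B : ℕ) (Xb : Fin B → Set X) (hXbmeas : ∀ b, MeasurableSet (Xb b))
    (hcover : (⋃ b, Xb b) = Set.univ)
    (w : Fin B → X → ℝ) (hwmeas : ∀ b, Measurable (w b))
    (hw01 : ∀ b x, w b x ∈ Set.Icc (0 : ℝ) 1)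
    (hwsum : ∀ x, ∑ b, w b x = 1)
    (hwzero : ∀ b x, x ∉ Xb b → w b x = 0)
    (f : Fin B → X → ℝ) (hf : ∀ b, Measurable (f b))
    (Pb : Fin B → Measure (X × ℝ))
    (hPb : ∀ b, Pb b = (P ((Xb b) ×ˢ Y))⁻¹ • P.restrict ((Xb b) ×ˢ Y)) :
    (∫⁻ p : X × ℝ, ENNReal.ofReal (L p.2 (∑ b, w b p.1 * f b p.1)) ∂P) ≤
      ∑ b, P ((Xb b) ×ˢ Y) *
        ∫⁻ p : X × ℝ, ENNReal.ofReal (L p.2 (f b p.1)) ∂(Pb b) := by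
  have hterm : ∀ b, P ((Xb b) ×ˢ Y) *
        ∫⁻ p : X × ℝ, ENNReal.ofReal (L p.2 (f b p.1)) ∂(Pb b) =
      ∫⁻ p : X × ℝ, ((Xb b) ×ˢ Y).indicator
        (fun p => ENNReal.ofReal (L p.2 (f b p.1))) p ∂P := by
    intro b
    rw [lintegral_indicator ((hXbmeas b).prod hYmeas), hPb b, lintegral_smul_measure,
      smul_eq_mul, ← mul_assoc]
    by_cases h0 : P ((Xb b) ×ˢ Y) = 0
    · rw [Measure.restrict_eq_zero.mpr h0]
      simp
    · rw [ENNReal.mul_inv_cancel h0 (measure_ne_top P _), one_mul]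
  have hmeas : ∀ b, Measurable (((Xb b) ×ˢ Y).indicator
      (fun p : X × ℝ => ENNReal.ofReal (L p.2 (f b p.1)))) := by
    intro b
    refine Measurable.indicator ?_ ((hXbmeas b).prod hYmeas)
    exact (hLmeas.comp (measurable_snd.prodMk ((hf b).comp measurable_fst))).ennreal_ofReal
  rw [Finset.sum_congr rfl (fun b _ => hterm b), ← lintegral_finsetSum _ (fun b _ => hmeas b)]
  refine lintegral_mono_ae ?_
  filter_upwards [hPY] with p hp
  have hJ : L p.2 (∑ b, w b p.1 * f b p.1) ≤ ∑ b, w b p.1 * L p.2 (f b p.1) := by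
    have := (hLconv p.2 hp).map_sum_le (t := Finset.univ) (w := fun b => w b p.1)
      (p := fun b => f b p.1) (fun b _ => (hw01 b p.1).1) (hwsum p.1) (fun b _ => Set.mem_univ _)
    simpa [smul_eq_mul] using this
  refine (ENNReal.ofReal_le_ofReal hJ).trans ?_
  rw [ENNReal.ofReal_sum_of_nonneg
    (fun b _ => mul_nonneg (hw01 b p.1).1 (hLnonneg p.2 hp _))]
  refine Finset.sum_le_sum (fun b _ => ?_)
  by_cases hx : p.1 ∈ Xb b
  · rw [Set.indicator_of_mem (Set.mem_prod.mpr ⟨hx, hp⟩)]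
    exact ENNReal.ofReal_le_ofReal
      (mul_le_of_le_one_left (hLnonneg p.2 hp _) (hw01 b p.1).2)
  · simp [hwzero b p.1 hx]
end

section
/- Let X be a measurable space, Y ⊆ ℝ closed, P a probability measure on X × Y, and L : Y × ℝ → [0,∞) a measurable loss function that is Lipschitz continuous with constant |L|₁. Let X = X_1 ∪ … ∪ X_B be a cover by measurable regions with measurable weights w_b : X → [0,1] satisfying Σ_b w_b = 1 and w_b = 0 off X_b. For each b with P(X_b × Y) > 0 let P_b := P(X_b×Y)^{-1}·P|_{X_b×Y} with marginal P_b^X on X, and let f_b : X → ℝ be measurable with ∫_{X_b} |f_b| dP_b^X < ∞ (take the integral as 0 if P(X_b × Y) = 0). Then the shifted loss of the composed predictor is P-integrable and | R_{L⋆,P}( Σ_{b=1}^B w_b·f_b ) | ≤ |L|₁ · Σ_{b=1}^B P(X_b × Y) · ∫_{X_b} |f_b| dP_b^X < ∞. -/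
open MeasureTheory

/-- For a Lipschitz continuous loss `L` (constant `C = |L|₁`), a cover
`X = X_1 ∪ … ∪ X_B` with measurable weights `w_b`, local distributions `P_b` (normalized
restrictions of `P`, the null measure when `P(X_b × Y) = 0`) with marginals `P_b^X`, and
measurable `f_b` with `∫_{X_b} |f_b| dP_b^X < ∞`, the shifted loss of the composed predictor
`Σ_b w_b·f_b` is `P`-integrable and
`|R_{L⋆,P}(Σ_b w_b·f_b)| ≤ |L|₁·Σ_b P(X_b × Y)·∫_{X_b}|f_b| dP_b^X < ∞`. -/
theorem stmt19 {X : Type*} [MeasurableSpace X]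
    (Y : Set ℝ) (hY : IsClosed Y) (hYmeas : MeasurableSet Y)
    (P : Measure (X × ℝ)) [IsProbabilityMeasure P]
    (hPY : ∀ᵐ p ∂P, p.2 ∈ Y)
    (L : ℝ → ℝ → ℝ)
    (hLmeas : Measurable (Function.uncurry L))
    (hLnonneg : ∀ y ∈ Y, ∀ t : ℝ, 0 ≤ L y t)
    (C : ℝ) (hC : 0 ≤ C)
    (hLip : ∀ y ∈ Y, ∀ s t : ℝ, |L y t - L y s| ≤ C * |t - s|)
    (B : ℕ) (Xb : Fin B → Set X) (hXbmeas : ∀ b, MeasurableSet (Xb b))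
    (hcover : (⋃ b, Xb b) = Set.univ)
    (w : Fin B → X → ℝ) (hwmeas : ∀ b, Measurable (w b))
    (hw01 : ∀ b x, w b x ∈ Set.Icc (0 : ℝ) 1)
    (hwsum : ∀ x, ∑ b, w b x = 1)
    (hwzero : ∀ b x, x ∉ Xb b → w b x = 0)
    (Pb : Fin B → Measure (X × ℝ))
    (hPb : ∀ b, Pb b = (P ((Xb b) ×ˢ Y))⁻¹ • P.restrict ((Xb b) ×ˢ Y))
    (f : Fin B → X → ℝ) (hf : ∀ b, Measurable (f b))
    (hfint : ∀ b, IntegrableOn (f b) (Xb b) ((Pb b).map Prod.fst)) :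
    Integrable (fun p : X × ℝ => L p.2 (∑ b, w b p.1 * f b p.1) - L p.2 0) P ∧
    |∫ p : X × ℝ, (L p.2 (∑ b, w b p.1 * f b p.1) - L p.2 0) ∂P| ≤
      C * ∑ b, (P ((Xb b) ×ˢ Y)).toReal *
        ∫ x in Xb b, |f b x| ∂((Pb b).map Prod.fst) := by
  have hS : ∀ b, MeasurableSet ((Xb b) ×ˢ Y) := fun b => (hXbmeas b).prod hYmeas
  have hm : ∀ b, ((Pb b).map Prod.fst).restrict (Xb b) = (Pb b).map Prod.fst := by
    intro b
    rw [Measure.restrict_map measurable_fst (hXbmeas b), hPb b, Measure.restrict_smul,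
      Measure.restrict_restrict (measurable_fst (hXbmeas b))]
    congr 3
    ext p
    simp only [Set.mem_inter_iff, Set.mem_preimage, Set.mem_prod]
    tauto
  have hr : ∀ b, P.restrict ((Xb b) ×ˢ Y) = P ((Xb b) ×ˢ Y) • Pb b := by
    intro b
    by_cases h0 : P ((Xb b) ×ˢ Y) = 0
    · rw [h0, zero_smul, Measure.restrict_eq_zero.2 h0]
    · rw [hPb b, smul_smul, ENNReal.mul_inv_cancel h0 (measure_ne_top _ _), one_smul]
  have hi1 : ∀ b, Integrable (fun p : X × ℝ => |f b p.1|) (Pb b) := by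
    intro b
    have h := hfint b
    rw [IntegrableOn, hm b] at h
    exact (h.comp_measurable measurable_fst).abs
  have hi2 : ∀ b, IntegrableOn (fun p : X × ℝ => |f b p.1|) ((Xb b) ×ˢ Y) P := by
    intro b
    rw [IntegrableOn, hr b]
    exact (hi1 b).smul_measure (measure_ne_top _ _)
  have hi3 : ∀ b, Integrable (((Xb b) ×ˢ Y).indicator (fun p : X × ℝ => |f b p.1|)) P :=
    fun b => (integrable_indicator_iff (hS b)).2 (hi2 b)
  have hval : ∀ b, ∫ p, ((Xb b) ×ˢ Y).indicator (fun p : X × ℝ => |f b p.1|) p ∂P =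
      (P ((Xb b) ×ˢ Y)).toReal * ∫ x in Xb b, |f b x| ∂((Pb b).map Prod.fst) := by
    intro b
    rw [integral_indicator (hS b), hr b, integral_smul_measure, hm b,
      integral_map measurable_fst.aemeasurable (hf b).abs.aestronglyMeasurable, smul_eq_mul]
  have hG : Integrable (fun p => C * ∑ b, ((Xb b) ×ˢ Y).indicator
      (fun p : X × ℝ => |f b p.1|) p) P :=
    (integrable_finsetSum _ fun b _ => hi3 b).const_mul C
  have hbd : ∀ᵐ p ∂P, ‖L p.2 (∑ b, w b p.1 * f b p.1) - L p.2 0‖ ≤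
      C * ∑ b, ((Xb b) ×ˢ Y).indicator (fun p : X × ℝ => |f b p.1|) p := by
    filter_upwards [hPY] with p hp
    rw [Real.norm_eq_abs]
    refine (hLip p.2 hp 0 _).trans (mul_le_mul_of_nonneg_left ?_ hC)
    rw [sub_zero]
    refine (Finset.abs_sum_le_sum_abs _ _).trans (Finset.sum_le_sum fun b _ => ?_)
    by_cases hx : p.1 ∈ Xb b
    · rw [Set.indicator_of_mem (show p ∈ (Xb b) ×ˢ Y from ⟨hx, hp⟩), abs_mul,
        abs_of_nonneg (hw01 b p.1).1]
      exact mul_le_of_le_one_left (abs_nonneg _) (hw01 b p.1).2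
    · rw [hwzero b _ hx, zero_mul, abs_zero]
      exact Set.indicator_nonneg (fun _ _ => abs_nonneg _) _
  have hmeas : Measurable (fun p : X × ℝ => L p.2 (∑ b, w b p.1 * f b p.1) - L p.2 0) := by
    have h1 : Measurable (fun p : X × ℝ => ∑ b, w b p.1 * f b p.1) :=
      Finset.measurable_fun_sum _ fun b _ =>
        ((hwmeas b).comp measurable_fst).mul ((hf b).comp measurable_fst)
    exact (hLmeas.comp (measurable_snd.prodMk h1)).sub
      (hLmeas.comp (measurable_snd.prodMk measurable_const))
  refine ⟨hG.mono' hmeas.aestronglyMeasurable hbd, ?_⟩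
  have h := norm_integral_le_of_norm_le hG hbd
  rw [integral_const_mul, integral_finsetSum _ fun b _ => hi3 b] at h
  simpa only [hval, Real.norm_eq_abs] using h
end
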